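/- Let χ be a primitive, even, quadratic Dirichlet character modulo f with f > 1 (so χ² = 1, χ ≠ 1, χ(−1) = 1, and the conductor of χ equals f). Then √f · L(1, χ) = 2 · L'(0, χ); equivalently, the ratio of the leading Laurent coefficients of L(s,χ) at s = 1 and at s = 0 equals L*(1,χ)/L*(0,χ) = 2·f^{−1/2}. -/

import Mathlib

open DirichletCharacter

/-!
# Leading terms at `0` and `1` of the `L`-function of an even quadratic character

Write `Λ(s, χ) = Gammaℝ(s) L(s, χ)`. As `χ` is even, `Gammaℝ` has a pole with residue `2` at `0`,
so `L'(0, χ) = Λ(0, χ) / 2`, whereas `L(1, χ) = Λ(1, χ)`. Since `χ` is real and primitive, the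
functional equation relates `Λ(0, χ)` and `Λ(1, χ)` through the root number, and the theorem is
equivalent to the statement that the Gauss sum `G` of `χ` is `√f`
(`sqrt_mul_LFunction_one_of_gaussSum_eq`).

Determining the sign of `G` avoids any factorisation of the conductor. Put
`T(a) = ∑ₙ (e(an²/f) + e(-an²/f))`, where `n` runs modulo `f` and `e(x) = exp(2πix)`.

* Gauss's formula `∑ₙ e(n²/N) = √N (1 + i) (1 + (-i)^N) / 2` (`sum_exp_sq_div`), which comes from
  the asymptotics of the Jacobi theta function near the point `2 / N`, shows that `T(1)` is `2√f`
  or `0` (`quadSum_one_eq`).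
* In particular `T(1)²` is an integer, so Galois conjugation `e(1/f) ↦ e(b/f)` gives
  `T(b)² = T(1)²` and `T(cb) T(1) = T(b) T(c)` for units `b`, `c` (`quadSum_mul`).
* Expanding `T` and using the primitivity and evenness of `χ`, one finds
  `∑ₐ χ(a) T(a) = 2 φ(f) G`, which is nonzero. By the previous point, multiplying this sum by
  `χ(c) T(c)` has the same effect as multiplying it by `T(1)`, so `χ(c) T(c) = T(1)` for all units
  `c`. Therefore `2 G = T(1)` (`two_mul_gaussSum_eq`).

As `G ≠ 0`, the value `T(1) = 0` is excluded and `G = √f`.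
-/

namespace EvenQuadratic

open Filter Topology Complex
open scoped Real ComplexConjugate

/-! ### Theta series with periodic coefficients -/

/-- Near the cusp `i∞`, the theta function tends to its constant term. -/
lemma tendsto_jacobiTheta₂_of_im_atTop {ι : Type*} {l : Filter ι} {τ : ι → ℂ}
    (hτ : Tendsto (fun i ↦ (τ i).im) l atTop) (x : ℝ) :
    Tendsto (fun i ↦ jacobiTheta₂ x (τ i)) l (𝓝 1) := by
  have h1 : ∑' n : ℤ, (if n = 0 then (1 : ℂ) else 0) = 1 := by simp
  rw [← h1]
  have hs := ((summable_jacobiTheta₂_term_iff 0 I).mpr (by simp)).norm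
  refine tendsto_tsum_of_dominated_convergence hs (fun n ↦ ?_) ?_
  · split_ifs with hn
    · simpa [hn, jacobiTheta₂_term] using tendsto_const_nhds
    · rw [tendsto_zero_iff_norm_tendsto_zero]
      simp only [norm_jacobiTheta₂_term, ofReal_im, mul_zero, sub_zero]
      refine Real.tendsto_exp_atBot.comp (hτ.const_mul_atTop_of_neg ?_)
      have : (0 : ℝ) < (n : ℝ) ^ 2 := by positivity
      nlinarith [Real.pi_pos]
  · filter_upwards [hτ.eventually_ge_atTop 1] with i hi n
    simp only [norm_jacobiTheta₂_term, ofReal_im, mul_zero, sub_zero, I_im, zero_im]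
    apply Real.exp_le_exp.mpr
    have : (0 : ℝ) ≤ π * (n : ℝ) ^ 2 := by positivity
    nlinarith

/-- A positive real factor does not interfere with the branch cut of the power function. -/
lemma ofReal_mul_cpow {a : ℝ} (ha : 0 < a) {z : ℂ} (hz : z ≠ 0) (w : ℂ) :
    ((a : ℂ) * z) ^ w = (a : ℂ) ^ w * z ^ w := by
  have ha' : (a : ℂ) ≠ 0 := by exact_mod_cast ha.ne'
  rw [cpow_def_of_ne_zero (mul_ne_zero ha' hz), cpow_def_of_ne_zero ha', cpow_def_of_ne_zero hz,
    log_ofReal_mul ha hz, ← Complex.exp_add, ofReal_log ha.le, add_mul]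

lemma sq_cpow_half {a : ℝ} (ha : 0 < a) : ((a : ℂ) ^ 2) ^ (1 / 2 : ℂ) = a := by
  rw [one_div]
  exact sq_cpow_two_inv (by simpa using ha)

/-- Poisson summation for a theta series with `M`-periodic unimodular coefficients `c`, obtained by
splitting `ℤ` into the residue classes modulo `M` and inverting each partial theta series. As `τ`
tends to `0` vertically, the right-hand side exhibits the mean value of `c` as leading
coefficient. -/
lemma tsum_periodic_mul_exp (M : ℕ) [NeZero M] (c : ℤ → ℂ) (hc : ∀ n k, c (k * M + n) = c n)
    (hnorm : ∀ n, ‖c n‖ = 1) {τ : ℂ} (hτ : 0 < τ.im) :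
    ∑' n : ℤ, c n * cexp (π * I * n ^ 2 * τ) =
      1 / (M * (-I * τ) ^ (1 / 2 : ℂ)) *
        ∑ r : Fin M, c (r : ℕ) * jacobiTheta₂ (((r : ℕ) / M : ℝ) : ℂ) (-1 / (M ^ 2 * τ)) := by
  have hM : (M : ℂ) ≠ 0 := NeZero.ne _
  have hτ0 : τ ≠ 0 := by rintro rfl; simp at hτ
  have hMτ : 0 < ((M : ℂ) ^ 2 * τ).im := by
    have : (M : ℂ) ^ 2 = ((M ^ 2 : ℝ) : ℂ) := by push_cast; rfl
    rw [this, im_ofReal_mul]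
    have : (0 : ℝ) < (M : ℝ) ^ 2 := by have := NeZero.pos M; positivity
    positivity
  have hsum : Summable fun n : ℤ ↦ c n * cexp (π * I * n ^ 2 * τ) := by
    refine ((summable_jacobiTheta₂_term_iff 0 τ).mpr hτ).norm.of_norm_bounded fun n ↦ ?_
    rw [norm_mul, hnorm, one_mul, jacobiTheta₂_term, mul_zero, zero_add]
  have hroot : (-I * ((M : ℂ) ^ 2 * τ)) ^ (1 / 2 : ℂ) = M * (-I * τ) ^ (1 / 2 : ℂ) := by
    have : -I * ((M : ℂ) ^ 2 * τ) = ((M ^ 2 : ℝ) : ℂ) * (-I * τ) := by push_cast; ring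
    have hM' : (0 : ℝ) < M := by exact_mod_cast NeZero.pos M
    rw [this, ofReal_mul_cpow (by positivity) (by simp [hτ0]), ofReal_pow, sq_cpow_half hM',
      ofReal_natCast]
  have hinner (r : ℕ) : ∑' k : ℤ, cexp (π * I * ((k * M + r : ℤ) : ℂ) ^ 2 * τ) =
      1 / (M * (-I * τ) ^ (1 / 2 : ℂ)) * jacobiTheta₂ ((r / M : ℝ) : ℂ) (-1 / (M ^ 2 * τ)) := by
    have h1 (k : ℤ) : cexp (π * I * ((k * M + r : ℤ) : ℂ) ^ 2 * τ) =
        cexp (π * I * r ^ 2 * τ) * jacobiTheta₂_term k (M * r * τ) (M ^ 2 * τ) := by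
      rw [jacobiTheta₂_term, ← Complex.exp_add]
      push_cast
      ring_nf
    simp_rw [h1]
    rw [tsum_mul_left]
    change _ * jacobiTheta₂ _ _ = _
    rw [jacobiTheta₂_functional_equation, hroot]
    have h2 : (M * r * τ : ℂ) / (M ^ 2 * τ) = ((r / M : ℝ) : ℂ) := by
      push_cast; field_simp
    have h3 : cexp (π * I * r ^ 2 * τ) * cexp (-π * I * (M * r * τ) ^ 2 / (M ^ 2 * τ)) = 1 := by
      rw [← Complex.exp_add, Complex.exp_eq_one_iff]
      refine ⟨0, ?_⟩
      field_simp
      simp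
    rw [h2]
    linear_combination (1 / (M * (-I * τ) ^ (1 / 2 : ℂ)) *
      jacobiTheta₂ ((r / M : ℝ) : ℂ) (-1 / (M ^ 2 * τ))) * h3
  obtain ⟨e, he⟩ : ∃ e : Fin M × ℤ ≃ ℤ, ∀ r k, e (r, k) = k * M + (r : ℕ) :=
    ⟨(Equiv.prodComm _ _).trans (Int.divModEquiv M).symm, fun _ _ ↦ rfl⟩
  rw [← e.tsum_eq, Summable.tsum_prod (f := fun p ↦ c (e p) * cexp (π * I * (e p : ℂ) ^ 2 * τ))
    ((e.summable_iff).mpr hsum), tsum_fintype, Finset.mul_sum]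
  refine Finset.sum_congr rfl fun r _ ↦ ?_
  simp_rw [he, hc]
  rw [tsum_mul_left, hinner]
  ring

/-! ### The quadratic Gauss sum for a general modulus -/

/-- Gauss's evaluation of the quadratic sum `∑ e(r²/N)` for every modulus `N`. It is the
Landsberg–Schaar argument: the leading asymptotics of `θ(2/N + iε)` as `ε → 0⁺` are computed once
directly, with coefficients of period `N`, and once after `τ ↦ -1/τ`, with coefficients of
period `2`. -/
lemma sum_exp_sq_div (N : ℕ) [NeZero N] :
    ∑ r : Fin N, cexp (2 * π * I * (r : ℕ) ^ 2 / N) =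
      (Real.sqrt N : ℂ) * ((1 + I) / 2) * (1 + (-I) ^ N) := by
  have hN : (0 : ℝ) < N := by exact_mod_cast NeZero.pos N
  have hN0 : (N : ℂ) ≠ 0 := NeZero.ne _
  set S := ∑ r : Fin N, cexp (2 * π * I * (r : ℕ) ^ 2 / N)
  let c₁ : ℤ → ℂ := fun n ↦ cexp (2 * π * I * n ^ 2 / N)
  let c₂ : ℤ → ℂ := fun n ↦ cexp (-(π * I * n ^ 2 * N / 2))
  have hc₁ (n k : ℤ) : c₁ (k * N + n) = c₁ n := by
    refine Complex.exp_eq_exp_iff_exists_int.mpr ⟨k ^ 2 * N + 2 * k * n, ?_⟩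
    push_cast; field_simp; ring
  have hc₂ (n k : ℤ) : c₂ (k * (2 : ℕ) + n) = c₂ n := by
    refine Complex.exp_eq_exp_iff_exists_int.mpr ⟨-(k ^ 2 * N + k * n * N), ?_⟩
    push_cast; ring
  have hn₁ (n : ℤ) : ‖c₁ n‖ = 1 := by
    have : 2 * π * I * n ^ 2 / N = ((2 * π * n ^ 2 / N : ℝ) : ℂ) * I := by push_cast; ring
    simp only [c₁, this, norm_exp_ofReal_mul_I]
  have hn₂ (n : ℤ) : ‖c₂ n‖ = 1 := by
    have : -(π * I * n ^ 2 * N / 2) = ((-(π * n ^ 2 * N / 2) : ℝ) : ℂ) * I := by push_cast; ring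
    simp only [c₂, this, norm_exp_ofReal_mul_I]
  let τ : ℝ → ℂ := fun ε ↦ 2 / N + ε * I
  have hτim (ε : ℝ) : (τ ε).im = ε := by
    have : (2 / N : ℂ) = ((2 / N : ℝ) : ℂ) := by push_cast; rfl
    simp only [τ, this, add_im, ofReal_im, mul_im, I_im, I_re, ofReal_re]; ring
  have hτ0 {ε : ℝ} (hε : 0 < ε) : τ ε ≠ 0 := by
    intro h; rw [← hτim ε, h] at hε; simp at hε
  -- the theta constant on the vertical line above the rational point `2 / N`
  let X : ℝ → ℂ := fun ε ↦ ∑' n : ℤ, cexp (π * I * n ^ 2 * τ ε)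
  have hpos : ∀ᶠ ε : ℝ in 𝓝[>] 0, 0 < ε := eventually_mem_nhdsWithin
  have hinv : Tendsto (fun ε : ℝ ↦ (1 / (N ^ 2 * ε) : ℝ)) (𝓝[>] 0) atTop := by
    have := (tendsto_inv_nhdsGT_zero (𝕜 := ℝ)).const_mul_atTop (show (0 : ℝ) < 1 / N ^ 2 by positivity)
    refine this.congr fun ε ↦ ?_
    rw [one_div, one_div, mul_inv]
  have hlim₁ : Tendsto (fun ε : ℝ ↦ (ε : ℂ) ^ (1 / 2 : ℂ) * X ε) (𝓝[>] 0) (𝓝 (S / N)) := by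
    have hθ (r : Fin N) := tendsto_jacobiTheta₂_of_im_atTop (l := 𝓝[>] (0 : ℝ))
      (τ := fun ε ↦ -1 / (N ^ 2 * (ε * I))) (by
        refine hinv.congr fun ε ↦ ?_
        have : (-1 / (N ^ 2 * (ε * I)) : ℂ) = ((1 / (N ^ 2 * ε) : ℝ) : ℂ) * I := by
          push_cast
          rcases eq_or_ne ε 0 with rfl | hε
          · simp
          have hε' : (ε : ℂ) ≠ 0 := by exact_mod_cast hε
          field_simp
          simp
        rw [this, im_ofReal_mul, I_im, mul_one]) ((r : ℕ) / N : ℝ)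
    have hlim := (tendsto_finsetSum Finset.univ
      fun r _ ↦ (hθ r).const_mul (c₁ (r : ℕ))).const_mul (1 / (N : ℂ))
    have hS : 1 / (N : ℂ) * ∑ r : Fin N, c₁ (r : ℕ) * 1 = S / N := by
      simp only [c₁, S, mul_one, Int.cast_natCast]; ring
    rw [hS] at hlim
    refine hlim.congr' ?_
    filter_upwards [hpos] with ε hε
    have hX : X ε = ∑' n : ℤ, c₁ n * cexp (π * I * n ^ 2 * (ε * I)) := by
      refine tsum_congr fun n ↦ ?_
      simp only [c₁, τ, ← Complex.exp_add]
      ring_nf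
    have hε' : (ε : ℂ) ^ (1 / 2 : ℂ) ≠ 0 := by
      simp [Complex.cpow_eq_zero_iff, hε.ne']
    rw [hX, tsum_periodic_mul_exp N c₁ hc₁ hn₁ (by simpa using hε)]
    have : -I * (ε * I) = ε := by linear_combination -(ε : ℂ) * I_mul_I
    rw [this]
    field_simp
  have hlim₂ : Tendsto (fun ε : ℝ ↦ (ε : ℂ) ^ (1 / 2 : ℂ) * X ε) (𝓝[>] 0)
      (𝓝 (1 / (-I * (2 / N)) ^ (1 / 2 : ℂ) * (1 / (2 * ((N : ℂ) ^ 2 / 4) ^ (1 / 2 : ℂ)))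
        * (1 + (-I) ^ N))) := by
    have hτlim : Tendsto τ (𝓝[>] 0) (𝓝 (2 / N)) := by
      have : Continuous τ := by fun_prop
      have := this.tendsto 0
      simp only [τ, ofReal_zero, zero_mul, add_zero] at this
      exact this.mono_left nhdsWithin_le_nhds
    -- `-1 / τ ε = -N / 2 + τ' ε`, where `τ' ε` tends to `0` tangentially to the imaginary axis
    let τ' : ℝ → ℂ := fun ε ↦ ε * (N / (2 * τ ε)) * I
    have hθ (x : ℝ) := tendsto_jacobiTheta₂_of_im_atTop (l := 𝓝[>] (0 : ℝ))
      (τ := fun ε ↦ -1 / ((2 : ℕ) ^ 2 * τ' ε)) (by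
        refine hinv.congr' ?_
        filter_upwards [hpos] with ε hε
        have : (-1 / ((2 : ℕ) ^ 2 * τ' ε) : ℂ) =
            ((1 / (N ^ 2 * ε) : ℝ) : ℂ) * I + ((-1 / (2 * N) : ℝ) : ℂ) := by
          have := hτ0 hε
          have hε0 : (ε : ℂ) ≠ 0 := by exact_mod_cast hε.ne'
          simp only [τ']
          push_cast
          field_simp
          simp only [τ]
          field_simp
          ring_nf
          simp
          ring_nf
        rw [this, add_im, im_ofReal_mul, I_im, mul_one, ofReal_im, add_zero]) x
    have hcp₁ : Tendsto (fun ε ↦ (-I * τ ε) ^ (1 / 2 : ℂ)) (𝓝[>] 0)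
        (𝓝 ((-I * (2 / N)) ^ (1 / 2 : ℂ))) := by
      refine (hτlim.const_mul _).cpow tendsto_const_nhds ?_
      right
      have : (-I * (2 / N) : ℂ) = ((-(2 / N) : ℝ) : ℂ) * I := by push_cast; ring
      rw [this, im_ofReal_mul, I_im, mul_one]
      exact (neg_neg_of_pos (by positivity)).ne
    have hcp₂ : Tendsto (fun ε ↦ (N / (2 * τ ε)) ^ (1 / 2 : ℂ)) (𝓝[>] 0)
        (𝓝 (((N : ℂ) ^ 2 / 4) ^ (1 / 2 : ℂ))) := by
      have h4 : (N : ℂ) ^ 2 / 4 = N / (2 * (2 / N)) := by field_simp; norm_num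
      rw [h4]
      refine (tendsto_const_nhds.div (hτlim.const_mul 2) (by simp [hN0])).cpow
        tendsto_const_nhds ?_
      left
      have : (N / (2 * (2 / N)) : ℂ) = ((N / (2 * (2 / N)) : ℝ) : ℂ) := by push_cast; rfl
      rw [this, ofReal_re]
      positivity
    have hlim := ((tendsto_const_nhds (x := (1 : ℂ))).div hcp₁ (by simp [cpow_eq_zero_iff, hN0])).mul
      ((tendsto_const_nhds (x := (1 : ℂ))).div (hcp₂.const_mul 2) (by simp [cpow_eq_zero_iff, hN0])) |>.mul
      (tendsto_finsetSum Finset.univ fun (r : Fin 2) _ ↦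
        (hθ ((r : ℕ) / (2 : ℕ) : ℝ)).const_mul (c₂ (r : ℕ)))
    have hS : ∑ r : Fin 2, c₂ (r : ℕ) * 1 = 1 + (-I) ^ N := by
      have : cexp (-(π * I * N / 2)) = (-I) ^ N := by
        rw [← exp_neg_pi_div_two_mul_I, ← Complex.exp_nat_mul]
        ring_nf
      simp [Fin.sum_univ_two, c₂, this]
    rw [hS] at hlim
    refine hlim.congr' ?_
    filter_upwards [hpos] with ε hε
    have hX : X ε = 1 / (-I * τ ε) ^ (1 / 2 : ℂ) *
        ∑' n : ℤ, c₂ n * cexp (π * I * n ^ 2 * τ' ε) := by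
      have h1 (z : ℂ) : jacobiTheta₂ 0 z = ∑' n : ℤ, cexp (π * I * n ^ 2 * z) :=
        tsum_congr fun n ↦ by simp [jacobiTheta₂_term]
      have h2 := jacobiTheta₂_functional_equation 0 (τ ε)
      rw [zero_div, h1, h1] at h2
      have h3 : cexp (-π * I * 0 ^ 2 / τ ε) = 1 := by simp
      rw [h3, mul_one] at h2
      refine h2.trans (congrArg _ (tsum_congr fun n ↦ ?_))
      have h4 : -1 / τ ε = -(N / 2) + τ' ε := by
        have := hτ0 hε
        simp only [τ']
        field_simp
        simp only [τ]
        field_simp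
        ring
      rw [h4, ← Complex.exp_add]
      ring_nf
    have hε' : (ε : ℂ) ^ (1 / 2 : ℂ) ≠ 0 := by
      simp [Complex.cpow_eq_zero_iff, hε.ne']
    have hτ'im : 0 < (τ' ε).im := by
      have h1 : τ' ε = ((ε * N / (2 * normSq (τ ε)) : ℝ) : ℂ) * (conj (τ ε) * I) := by
        simp only [τ']
        rw [div_mul_eq_div_div, div_eq_mul_inv _ (τ ε), Complex.inv_def]
        push_cast
        ring
      have h2 : (conj (τ ε) * I).im = 2 / N := by
        have : (2 / N : ℂ) = ((2 / N : ℝ) : ℂ) := by push_cast; rfl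
        simp [τ, this, -ofReal_div]
      rw [h1, im_ofReal_mul, h2]
      have := normSq_pos.mpr (hτ0 hε)
      positivity
    rw [hX, tsum_periodic_mul_exp 2 c₂ hc₂ hn₂ hτ'im]
    have : (-I * τ' ε) ^ (1 / 2 : ℂ) = (ε : ℂ) ^ (1 / 2 : ℂ) * (N / (2 * τ ε)) ^ (1 / 2 : ℂ) := by
      have h1 : -I * τ' ε = ε * (N / (2 * τ ε)) := by
        simp only [τ']
        linear_combination -((ε : ℂ) * (N / (2 * τ ε))) * I_mul_I
      rw [h1, ofReal_mul_cpow hε (by simp [hN0, hτ0 hε])]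
    rw [this]
    simp only [Pi.div_apply]
    push_cast
    field_simp
  -- it remains to determine the branches of the square roots in the second limit
  have hlim := tendsto_nhds_unique hlim₁ hlim₂
  have hsqrt : (0 : ℝ) < Real.sqrt N := Real.sqrt_pos.mpr hN
  have hsqrt0 : (Real.sqrt N : ℂ) ≠ 0 := by exact_mod_cast hsqrt.ne'
  have hsq : (Real.sqrt N : ℂ) ^ 2 = N := by
    rw [← ofReal_pow, Real.sq_sqrt hN.le, ofReal_natCast]
  have hI : (1 - I) ≠ 0 := fun h ↦ by simpa using congrArg Complex.re h
  have hw : (-I * (2 / N)) ^ (1 / 2 : ℂ) = (1 - I) / (Real.sqrt N : ℂ) := by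
    have h1 : -I * (2 / N) = ((1 - I) / (Real.sqrt N : ℂ)) ^ 2 := by
      rw [div_pow, hsq]
      linear_combination -(1 / (N : ℂ)) * I_sq
    rw [h1, one_div]
    exact sq_cpow_two_inv (by rw [div_ofReal_re]; simpa using hsqrt)
  have hw' : ((N : ℂ) ^ 2 / 4) ^ (1 / 2 : ℂ) = N / 2 := by
    have h1 : (N : ℂ) ^ 2 / 4 = ((N / 2 : ℝ) : ℂ) ^ 2 := by push_cast; ring
    rw [h1, sq_cpow_half (by positivity)]
    push_cast; rfl
  have hdiv : 1 / ((1 - I) / (Real.sqrt N : ℂ)) = Real.sqrt N * ((1 + I) / 2) := by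
    field_simp
    linear_combination I_sq
  rw [hw, hw', hdiv] at hlim
  field_simp at hlim
  linear_combination hlim / 2

/-! ### Reduction to the root number -/

/-- The functional equation gives the claim as soon as the Gauss sum is known to be `√f`, that is,
as soon as the root number is `1`. -/
lemma sqrt_mul_LFunction_one_of_gaussSum_eq (f : ℕ) [NeZero f] (hf : 1 < f) (χ : DirichletCharacter ℂ f)
    (hquad : χ ^ 2 = 1) (hne : χ ≠ 1) (heven : χ.Even) (hprim : χ.IsPrimitive)
    (hG : gaussSum χ ZMod.stdAddChar = (Real.sqrt f : ℂ)) :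
    (Real.sqrt f : ℂ) * χ.LFunction 1 = 2 * deriv χ.LFunction 0 := by
  have hf0 : (Real.sqrt f : ℂ) ≠ 0 := by
    have : (0 : ℝ) < Real.sqrt f := Real.sqrt_pos.mpr (by positivity)
    exact_mod_cast this.ne'
  have hsq : (f : ℂ) ^ (1 / 2 : ℂ) = (Real.sqrt f : ℂ) := by
    rw [Real.sqrt_eq_rpow, Complex.ofReal_cpow (by positivity)]
    norm_num
  have hinv : χ⁻¹ = χ := by
    rw [inv_eq_iff_mul_eq_one, ← sq, hquad]
  have hroot : χ.rootNumber = 1 := by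
    rw [rootNumber, hG, if_pos heven, hsq]
    simp [hf0]
  have hL (s : ℂ) : χ.LFunction s = χ.completedLFunction s / Gammaℝ s := by
    rw [LFunction_eq_completed_div_gammaFactor χ s (.inr hf.ne'), heven.gammaFactor_def]
  have h1 : χ.LFunction 1 = χ.completedLFunction 1 := by
    rw [hL, Gammaℝ_one, div_one]
  have hFE := hprim.completedLFunction_one_sub 0
  rw [hroot, hinv, sub_zero, mul_one, zero_sub, Complex.cpow_neg, hsq] at hFE
  have hΛ : Tendsto χ.completedLFunction (𝓝[≠] 0) (𝓝 (χ.completedLFunction 0)) :=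
    ((differentiable_completedLFunction hne).continuous.tendsto 0).mono_left nhdsWithin_le_nhds
  have hderiv : HasDerivAt χ.LFunction (χ.completedLFunction 0 / 2) 0 := by
    rw [hasDerivAt_iff_tendsto_slope_zero]
    refine (hΛ.div Gammaℝ_residue_zero two_ne_zero).congr fun s ↦ ?_
    -- the pole of `Gammaℝ` at `0` has junk value `0`, and division by it gives the true value `0`
    have h0 : χ.LFunction 0 = 0 := by
      have : Gammaℝ 0 = 0 := Gammaℝ_eq_zero_iff.mpr ⟨0, by simp⟩
      rw [hL, this, div_zero]
    rw [h0, zero_add, sub_zero, hL, smul_eq_mul, Pi.div_apply]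
    ring
  rw [hderiv.deriv, h1, hFE]
  field_simp

/-! ### Galois action on quadratic sums -/

/-- Galois conjugation: an integer polynomial vanishing at `e(1/N)` vanishes at `e(b/N)` for every
unit `b`, because these numbers have the same minimal polynomial. -/
lemma aeval_stdAddChar_unit_eq_zero (N : ℕ) [NeZero N] (P : Polynomial ℤ)
    (h : Polynomial.aeval (ZMod.stdAddChar (1 : ZMod N)) P = (0 : ℂ)) (b : (ZMod N)ˣ) :
    Polynomial.aeval (ZMod.stdAddChar (b : ZMod N)) P = (0 : ℂ) := by
  have hprim : IsPrimitiveRoot (ZMod.stdAddChar (1 : ZMod N)) N := by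
    have := Complex.isPrimitiveRoot_exp N (NeZero.ne N)
    have h1 := ZMod.stdAddChar_coe (N := N) 1
    simp only [Int.cast_one, mul_one] at h1
    rwa [h1]
  have hb : ZMod.stdAddChar (b : ZMod N) = ZMod.stdAddChar (1 : ZMod N) ^ (b : ZMod N).val := by
    rw [← AddChar.map_nsmul_eq_pow, nsmul_one, ZMod.natCast_zmod_val]
  have hmin := hprim.minpoly_eq_pow_coprime (ZMod.val_coe_unit_coprime b)
  have hdvd := minpoly.isIntegrallyClosed_dvd (hprim.isIntegral (NeZero.pos N)) h
  rw [hmin, ← hb] at hdvd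
  obtain ⟨Q, rfl⟩ := hdvd
  rw [map_mul, minpoly.aeval, zero_mul]

/-- The quadratic exponential sum `∑ₙ (e(an²/N) + e(-an²/N))` over `n` modulo `N`, with
`e(x) = exp(2πix)`; it is real and even in `a`. -/
noncomputable def quadSum (N : ℕ) [NeZero N] (a : ZMod N) : ℂ :=
  ∑ n : ZMod N, (ZMod.stdAddChar (a * n ^ 2) + ZMod.stdAddChar (-(a * n ^ 2)))

/-- An integer polynomial whose value at the root of unity `e(b/N)` is `quadSum N (b * a)`. The
exponents are residues lifted to `{0, …, N - 1}`. -/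
noncomputable def quadSumPoly (N : ℕ) [NeZero N] (a : ZMod N) : Polynomial ℤ :=
  ∑ n : ZMod N, (Polynomial.X ^ (a * n ^ 2).val + Polynomial.X ^ (-(a * n ^ 2)).val)

lemma aeval_quadSumPoly (N : ℕ) [NeZero N] (a b : ZMod N) :
    Polynomial.aeval (ZMod.stdAddChar b) (quadSumPoly N a) = quadSum N (b * a) := by
  have key (x : ZMod N) : ZMod.stdAddChar b ^ x.val = ZMod.stdAddChar (b * x) := by
    rw [← AddChar.map_nsmul_eq_pow, nsmul_eq_mul, ZMod.natCast_zmod_val, mul_comm]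
  simp only [quadSumPoly, quadSum, map_sum, map_add, map_pow, Polynomial.aeval_X, key, mul_neg, mul_assoc]

lemma quadSum_sq (N : ℕ) [NeZero N] (K : ℤ) (hK : quadSum N 1 ^ 2 = K) (b : (ZMod N)ˣ) :
    quadSum N b ^ 2 = K := by
  have := aeval_stdAddChar_unit_eq_zero N (quadSumPoly N 1 ^ 2 - Polynomial.C K)
    (by simp [aeval_quadSumPoly, hK]) b
  simpa [aeval_quadSumPoly, sub_eq_zero] using this

/-- If `quadSum N 1` is a square root of an integer, then `b ↦ quadSum N b / quadSum N 1` is a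
character (up to division by zero). The product `quadSum N b * quadSum N 1` is an integer `±K`,
hence is fixed by the Galois conjugation attached to `c`. -/
lemma quadSum_mul (N : ℕ) [NeZero N] (K : ℤ) (hK : quadSum N 1 ^ 2 = K) (b c : (ZMod N)ˣ) :
    quadSum N (c * b) * quadSum N 1 = quadSum N b * quadSum N c := by
  by_cases h0 : quadSum N 1 = 0
  · have : quadSum N b = 0 := by
      have := quadSum_sq N K hK b
      rw [← hK, h0] at this
      simpa using this
    simp [h0, this]
  obtain ⟨r, hr⟩ : ∃ r : ℤ, quadSum N b * quadSum N 1 = r := by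
    rcases sq_eq_sq_iff_eq_or_eq_neg.mp ((quadSum_sq N K hK b).trans hK.symm) with h | h
    · exact ⟨K, by rw [h, ← sq, hK]⟩
    · exact ⟨-K, by rw [h, neg_mul, ← sq, hK, Int.cast_neg]⟩
  have := aeval_stdAddChar_unit_eq_zero N (quadSumPoly N b * quadSumPoly N 1 - Polynomial.C r)
    (by simp [aeval_quadSumPoly, hr]) c
  have h2 : quadSum N (c * b) * quadSum N c = r := by simpa [aeval_quadSumPoly, sub_eq_zero] using this
  have h3 : quadSum N c ^ 2 = quadSum N 1 ^ 2 := (quadSum_sq N K hK c).trans hK.symm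
  apply mul_right_cancel₀ h0
  linear_combination -quadSum N (c * b) * h3 + quadSum N c * (h2 - hr)

/-! ### The Gauss sum of an even quadratic character -/

/-- If the Gauss sum of a primitive character vanished, so would the discrete Fourier transform of
the character, which is injective. -/
lemma gaussSum_ne_zero_of_isPrimitive (N : ℕ) [NeZero N] (χ : DirichletCharacter ℂ N)
    (hprim : χ.IsPrimitive) :
    gaussSum χ ZMod.stdAddChar ≠ 0 := by
  intro h
  have h1 : ZMod.dft (χ : ZMod N → ℂ) = 0 := by
    ext k
    rw [hprim.fourierTransform_eq_inv_mul_gaussSum, h, mul_zero, Pi.zero_apply]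
  have h2 := congrFun ((LinearEquiv.map_eq_zero_iff _).mp h1) 1
  simp at h2

/-- The sum `∑ χ(a) quadSum(a)` equals `2φ(N)` times the Gauss sum by primitivity of `χ`. It is
nonzero, so multiplicativity of `quadSum` under units forces `χ(c) quadSum(c)` to be independent
of `c`, and comparing the two values gives the result. -/
lemma two_mul_gaussSum_eq (N : ℕ) [NeZero N] (χ : DirichletCharacter ℂ N)
    (hquad : χ ^ 2 = 1) (heven : χ.Even) (hprim : χ.IsPrimitive)
    (K : ℤ) (hK : quadSum N 1 ^ 2 = K) :
    2 * gaussSum χ ZMod.stdAddChar = quadSum N 1 := by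
  classical
  set G := gaussSum χ ZMod.stdAddChar with hG
  set φ : ℂ := (Fintype.card (ZMod N)ˣ : ℂ)
  have hφ : φ ≠ 0 := Nat.cast_ne_zero.mpr Fintype.card_ne_zero
  have hinv : χ⁻¹ = χ := by rw [inv_eq_iff_mul_eq_one, ← sq, hquad]
  have hG0 : G ≠ 0 := gaussSum_ne_zero_of_isPrimitive N χ hprim
  have hsum : ∑ a : ZMod N, χ a * quadSum N a = 2 * φ * G := by
    have hshift (c : ZMod N) : ∑ a, χ a * ZMod.stdAddChar (c * a) = χ c * G := by
      have := gaussSum_mulShift_of_isPrimitive ZMod.stdAddChar hprim c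
      rw [hinv] at this
      rwa [gaussSum] at this
    have hsq (n : ZMod N) : χ (n ^ 2) = (1 : MulChar (ZMod N) ℂ) n := by
      rw [← hquad, map_pow, MulChar.pow_apply' _ two_ne_zero]
    calc ∑ a : ZMod N, χ a * quadSum N a
        = ∑ n : ZMod N, (∑ a, χ a * ZMod.stdAddChar (n ^ 2 * a)
            + ∑ a, χ a * ZMod.stdAddChar (-n ^ 2 * a)) := by
          simp only [quadSum, Finset.mul_sum, ← Finset.sum_add_distrib]
          rw [Finset.sum_comm]
          refine Finset.sum_congr rfl fun n _ ↦ Finset.sum_congr rfl fun a _ ↦ ?_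
          rw [mul_add, mul_comm a, neg_mul]
      _ = ∑ n : ZMod N, 2 * G * (1 : MulChar (ZMod N) ℂ) n := by
          refine Finset.sum_congr rfl fun n _ ↦ ?_
          rw [hshift, hshift, heven.eval_neg, hsq]
          ring
      _ = 2 * φ * G := by
          rw [← Finset.mul_sum, MulChar.sum_one_eq_card_units]
          ring
  have hunits : ∑ a : ZMod N, χ a * quadSum N a = ∑ a : (ZMod N)ˣ, χ a * quadSum N a := by
    refine (Finset.sum_of_injOn (fun u : (ZMod N)ˣ ↦ (u : ZMod N)) Units.val_injective.injOn
      (by simp) (fun a _ ha ↦ ?_) (fun _ _ ↦ rfl)).symm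
    rw [χ.map_nonunit fun h ↦ ha ⟨h.unit, by simp, h.unit_spec⟩, zero_mul]
  have htwist (c : (ZMod N)ˣ) : χ c * quadSum N c = quadSum N 1 := by
    have h1 : χ c * quadSum N c * (2 * φ * G) = quadSum N 1 * (2 * φ * G) := by
      rw [← hsum, hunits, Finset.mul_sum, Finset.mul_sum,
        ← Equiv.sum_comp (Equiv.mulLeft c) fun a : (ZMod N)ˣ ↦ quadSum N 1 * (χ a * quadSum N a)]
      refine Finset.sum_congr rfl fun b _ ↦ ?_
      simp only [Equiv.coe_mulLeft, Units.val_mul, map_mul]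
      linear_combination -(χ c * χ b) * quadSum_mul N K hK b c
    exact mul_right_cancel₀ (by simp [hφ, hG0]) h1
  rw [hunits, Finset.sum_congr rfl fun c _ ↦ htwist c, Finset.sum_const, nsmul_eq_mul,
    Finset.card_univ] at hsum
  exact mul_left_cancel₀ hφ (by linear_combination -hsum)

/-- The two values correspond to `N ≡ 0, 1` and to `N ≡ 2, 3` modulo `4`. -/
lemma quadSum_one_eq (N : ℕ) [NeZero N] : quadSum N 1 = 2 * (Real.sqrt N : ℂ) ∨ quadSum N 1 = 0 := by
  have hS : ∑ n : ZMod N, ZMod.stdAddChar (n ^ 2) =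
      (Real.sqrt N : ℂ) * ((1 + I) / 2) * (1 + (-I) ^ N) := by
    rw [← sum_exp_sq_div N]
    obtain ⟨m, rfl⟩ := Nat.exists_eq_succ_of_ne_zero (NeZero.ne N)
    refine Finset.sum_congr rfl fun (r : ZMod (m + 1)) _ ↦ ?_
    have := ZMod.stdAddChar_coe (N := m + 1) ((r.val : ℤ) ^ 2)
    push_cast at this
    rw [ZMod.natCast_zmod_val] at this
    rw [this]
    push_cast
    rfl
  have hS' : ∑ n : ZMod N, ZMod.stdAddChar (-n ^ 2) =
      (Real.sqrt N : ℂ) * ((1 - I) / 2) * (1 + I ^ N) := by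
    have h := congrArg conj hS
    simp only [map_sum, map_mul, map_add, map_div₀, map_pow, map_neg, map_one, conj_I,
      conj_ofReal, map_ofNat, neg_neg, ← sub_eq_add_neg] at h
    rw [← h]
    exact Finset.sum_congr rfl fun n _ ↦ AddChar.map_neg_eq_conj _ _
  have hT : quadSum N 1 =
      (Real.sqrt N : ℂ) * ((1 + I) / 2 * (1 + (-I) ^ N) + (1 - I) / 2 * (1 + I ^ N)) := by
    simp only [quadSum, one_mul, Finset.sum_add_distrib]
    rw [hS, hS']
    ring
  have hI4 : (-I) ^ 4 = 1 := by rw [neg_pow, I_pow_four]; norm_num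
  have hmod := Nat.div_add_mod N 4
  rw [hT, ← hmod, pow_add, pow_mul, pow_add, pow_mul, I_pow_four, hI4, one_pow, one_mul, one_mul,
    hmod]
  have hlt : N % 4 < 4 := Nat.mod_lt _ (by norm_num)
  interval_cases N % 4
  · left; ring
  · left; linear_combination -(Real.sqrt N : ℂ) * I_sq
  · right; simp
  · right
    linear_combination (-(Real.sqrt N : ℂ) * (I ^ 2 - 1)) * I_sq

end EvenQuadratic

/-- If `χ` is a primitive, even, quadratic Dirichlet character modulo `f` with `f > 1`,
then `√f · L(1, χ) = 2 · L'(0, χ)`, i.e. the ratio of the leading Laurent coefficients of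
`L(s,χ)` at `s = 1` and `s = 0` is `L*(1,χ)/L*(0,χ) = 2·f^{-1/2}`. -/
theorem sqrt_conductor_mul_LFunction_one_eq_two_mul_deriv_LFunction_zero
    (f : ℕ) (hf : 1 < f) (χ : DirichletCharacter ℂ f)
    (hquad : χ ^ 2 = 1) (hne : χ ≠ 1) (heven : χ.Even) (hprim : χ.IsPrimitive) :
    haveI : NeZero f := ⟨by omega⟩
    (Real.sqrt f : ℂ) * χ.LFunction 1 = 2 * deriv χ.LFunction 0 := by
  have : NeZero f := ⟨by omega⟩
  have hsq : (Real.sqrt f : ℂ) ^ 2 = f := by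
    rw [← Complex.ofReal_pow, Real.sq_sqrt (Nat.cast_nonneg f), Complex.ofReal_natCast]
  refine EvenQuadratic.sqrt_mul_LFunction_one_of_gaussSum_eq f hf χ hquad hne heven hprim ?_
  rcases EvenQuadratic.quadSum_one_eq f with hT | hT
  · have := EvenQuadratic.two_mul_gaussSum_eq f χ hquad heven hprim (4 * f)
      (by rw [hT, mul_pow, hsq]; push_cast; ring)
    exact mul_left_cancel₀ two_ne_zero (this.trans hT)
  -- a vanishing `quadSum f 1` would force the Gauss sum of `χ` to vanish
  · have := EvenQuadratic.two_mul_gaussSum_eq f χ hquad heven hprim 0 (by simp [hT])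
    rw [hT] at this
    exact absurd this (mul_ne_zero two_ne_zero
      (EvenQuadratic.gaussSum_ne_zero_of_isPrimitive f χ hprim))
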